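/- Let p be an odd prime, G a finite abelian p-group of order n, k an integer with 2 ≤ k < n and p | k, and x = (x_1,…,x_m) ∈ Z_{p^{t_1}} ⊕ ⋯ ⊕ Z_{p^{t_m}}. If there exists an index i with p ∤ x_i, then (G, B_k^x) is a 1-design. -/

import Mathlib

open Finset

/-- The family of `k`-element subsets of `G` whose elements sum to `x`. -/
def sumBlocks (G : Type) [AddCommGroup G] [Fintype G] [DecidableEq G]
    (k : ℕ) (x : G) : Finset (Finset G) :=
  Finset.univ.filter (fun T => T.card = k ∧ T.sum id = x)

/-- The family of `k`-element subsets of `G \ {0}` whose elements sum to `x`. -/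
def sumBlocksStar (G : Type) [AddCommGroup G] [Fintype G] [DecidableEq G]
    (k : ℕ) (x : G) : Finset (Finset G) :=
  Finset.univ.filter (fun T => T.card = k ∧ T.sum id = x ∧ (0 : G) ∉ T)

/-- `(G, B_k^x)` is a 1-design: the block family is nonempty and every
point of `G` lies in the same number of blocks. -/
def isOneDesign (G : Type) [AddCommGroup G] [Fintype G] [DecidableEq G]
    (k : ℕ) (x : G) : Prop :=
  sumBlocks G k x ≠ ∅ ∧ ∃ r : ℕ, ∀ y : G,
    ((sumBlocks G k x).filter (fun B => y ∈ B)).card = r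

/-- `e(x) = max {d : d ∣ exp(G), x ∈ dG}`. -/
noncomputable def eMax (G : Type) [AddCommGroup G] [Fintype G] [DecidableEq G] (x : G) : ℕ :=
  Nat.findGreatest (fun d => d ∣ AddMonoid.exponent G ∧ ∃ y : G, d • y = x)
    (AddMonoid.exponent G)

lemma cardA (G : Type) [AddCommGroup G] [Fintype G] [DecidableEq G] (j : ℕ) (x y : G) :
    ((sumBlocks G (j+1) x).filter (fun B => y ∈ B)).card
      = (sumBlocksStar G j (x - (j+1) • y)).card := by
  have himg : ∀ (T : Finset G) (c : G), (T.image (· + c)).card = T.card := fun T c =>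
    Finset.card_image_of_injective _ (add_left_injective c)
  have hsum : ∀ (T : Finset G) (c : G), (T.image (· + c)).sum id = T.sum id + T.card • c := by
    intro T c
    rw [Finset.sum_image (fun a _ b _ h => add_left_injective c h)]
    simp [Finset.sum_add_distrib]
  refine Finset.card_bij' (fun T _ => (T.image (· + -y)).erase 0)
    (fun S _ => (insert 0 S).image (· + y)) ?_ ?_ ?_ ?_
  · intro T hT
    simp only [sumBlocks, sumBlocksStar, mem_filter, mem_univ, true_and] at hT ⊢
    obtain ⟨⟨h1, h2⟩, h3⟩ := hT
    have h0 : (0 : G) ∈ T.image (· + -y) := by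
      rw [mem_image]; exact ⟨y, h3, by simp⟩
    refine ⟨?_, ?_, by simp⟩
    · rw [card_erase_of_mem h0, himg, h1]; rfl
    · rw [Finset.sum_erase _ (by simp), hsum, h1, h2, smul_neg, sub_eq_add_neg]
  · intro S hS
    simp only [sumBlocks, sumBlocksStar, mem_filter, mem_univ, true_and] at hS ⊢
    obtain ⟨h1, h2, h3⟩ := hS
    refine ⟨⟨?_, ?_⟩, ?_⟩
    · rw [himg, card_insert_of_notMem h3, h1]
    · rw [hsum, card_insert_of_notMem h3, sum_insert h3, h1, h2]; simp
    · rw [mem_image]; exact ⟨0, by simp, by simp⟩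
  · intro T hT
    simp only [sumBlocks, mem_filter, mem_univ, true_and] at hT
    have h0 : (0 : G) ∈ T.image (· + -y) := by
      rw [mem_image]; exact ⟨y, hT.2, by simp⟩
    simp only [insert_erase h0, image_image]
    ext a; simp
  · intro S hS
    simp only [sumBlocksStar, mem_filter, mem_univ, true_and] at hS
    have : ((insert 0 S).image (· + y)).image (· + -y) = insert 0 S := by
      rw [image_image]
      ext a; simp
    simp only [this, erase_insert hS.2.2]

lemma cardB (G : Type) [AddCommGroup G] [Fintype G] [DecidableEq G] (j : ℕ) (x : G) :
    (sumBlocks G (j+1) x).card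
      = (sumBlocksStar G j x).card + (sumBlocksStar G (j+1) x).card := by
  have h := cardA G j x 0
  rw [smul_zero, sub_zero] at h
  rw [← h, ← Finset.card_filter_add_card_filter_not (s := sumBlocks G (j+1) x)
    (p := fun B => (0 : G) ∈ B)]
  congr 2
  ext T
  simp [sumBlocks, sumBlocksStar, and_assoc]

lemma cardC (G : Type) [AddCommGroup G] [Fintype G] [DecidableEq G] (j : ℕ) (x : G) :
    (j+1) * (sumBlocks G (j+1) x).card
      = ∑ y : G, (sumBlocksStar G j (x - (j+1) • y)).card := by
  simp_rw [← cardA, Finset.card_filter]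
  rw [Finset.sum_comm, mul_comm, ← smul_eq_mul, ← Finset.sum_const]
  apply Finset.sum_congr rfl
  intro T hT
  simp only [sumBlocks, mem_filter, mem_univ, true_and] at hT
  simp [hT.1]

lemma constStar (G : Type) [AddCommGroup G] [Fintype G] [DecidableEq G] (p : ℕ) (hp : p.Prime)
    (s : ℕ) (hG : Nat.card G = p ^ s) (f : G →+ ZMod p) (j : ℕ) :
    ∀ z w : G, f z ≠ 0 → f w ≠ 0 →
      (sumBlocksStar G j z).card = (sumBlocksStar G j w).card ∧
      (sumBlocks G j z).card = (sumBlocks G j w).card := by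
  induction j with
  | zero =>
    have h0 : ∀ z : G, f z ≠ 0 → sumBlocks G 0 z = ∅ ∧ sumBlocksStar G 0 z = ∅ := by
      intro z hz
      have : (0 : G) ≠ z := by rintro rfl; simp at hz
      constructor
      · ext T
        simp only [sumBlocks, mem_filter, mem_univ, true_and, card_eq_zero, notMem_empty, iff_false]
        rintro ⟨rfl, h⟩
        exact this (by simpa using h)
      · ext T
        simp only [sumBlocksStar, mem_filter, mem_univ, true_and, card_eq_zero, notMem_empty,
          iff_false]
        rintro ⟨rfl, h, _⟩
        exact this (by simpa using h)
    intro z w hz hw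
    rw [(h0 z hz).1, (h0 z hz).2, (h0 w hw).1, (h0 w hw).2]; simp
  | succ j ih =>
    intro z w hz hw
    have key : (sumBlocks G (j+1) z).card = (sumBlocks G (j+1) w).card := by
      apply Nat.eq_of_mul_eq_mul_left (Nat.succ_pos j)
      rw [Nat.succ_eq_add_one, cardC, cardC]
      by_cases hd : p ∣ j + 1
      · have hk : ∀ y : G, f ((j+1) • y) = 0 := by
          intro y
          obtain ⟨c, hc⟩ := hd
          rw [map_nsmul, hc, nsmul_eq_mul]; simp
        apply Finset.sum_congr rfl
        intro y _
        exact (ih _ _ (by rw [map_sub, hk, sub_zero]; exact hz)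
          (by rw [map_sub, hk, sub_zero]; exact hw)).1
      · have hc : (Nat.card G).Coprime (j+1) := by
          rw [hG]; exact Nat.Coprime.pow_left _ ((Nat.Prime.coprime_iff_not_dvd hp).2 hd)
        have : ∀ v : G, ∑ y : G, (sumBlocksStar G j (v - (j+1) • y)).card
            = ∑ y : G, (sumBlocksStar G j y).card := by
          intro v
          exact Equiv.sum_comp ((nsmulCoprime hc).trans (Equiv.subLeft v))
            (fun y => (sumBlocksStar G j y).card)
        rw [this, this]
    refine ⟨?_, key⟩
    have h1 := cardB G j z
    have h2 := cardB G j w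
    have h3 := (ih z w hz hw).1
    omega

lemma exBlock (G : Type) [AddCommGroup G] [Fintype G] [DecidableEq G] (p : ℕ)
    (f : G →+ ZMod p) (x : G) (hx : f x ≠ 0) (k : ℕ) (hk : 1 ≤ k) (hkn : k < Fintype.card G) :
    ∃ z, f z ≠ 0 ∧ sumBlocks G k z ≠ ∅ := by
  have hx0 : x ≠ 0 := by rintro rfl; simp at hx
  obtain ⟨T, hT, hTc⟩ := Finset.exists_subset_card_eq
    (s := ((univ : Finset G).erase 0).erase x) (n := k - 1) (by
      rw [card_erase_of_mem (by simp [hx0]), card_erase_of_mem (by simp), card_univ]; omega)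
  have h0 : (0 : G) ∉ T := fun h => by simpa using hT h
  have h1 : x ∉ T := fun h => by simpa using hT h
  have ne : ∀ a, a ∉ T → sumBlocks G k (a + T.sum id) ≠ ∅ := by
    intro a ha
    apply Finset.Nonempty.ne_empty
    refine ⟨insert a T, ?_⟩
    simp only [sumBlocks, mem_filter, mem_univ, true_and]
    rw [card_insert_of_notMem ha, sum_insert ha]
    exact ⟨by omega, rfl⟩
  by_cases h : f (0 + T.sum id) = 0
  · refine ⟨_, ?_, ne x h1⟩
    rw [zero_add] at h
    rw [map_add, h, add_zero]; exact hx
  · exact ⟨_, h, ne 0 h0⟩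

theorem stmt4 (p m : ℕ) (hp : p.Prime) (hodd : Odd p)
    (t : Fin m → ℕ) (ht : ∀ i, 1 ≤ t i) (hmono : Monotone t)
    [∀ i, NeZero (p ^ t i)]
    (k : ℕ) (hk2 : 2 ≤ k)
    (hkn : k < Fintype.card ((i : Fin m) → ZMod (p ^ t i)))
    (hpk : p ∣ k)
    (x : (i : Fin m) → ZMod (p ^ t i))
    (hi : ∃ i, ¬ (p ∣ (x i).val)) :
    isOneDesign ((i : Fin m) → ZMod (p ^ t i)) k x := by
  obtain ⟨i, hxi⟩ := hi
  have hdvd : p ∣ p ^ t i := dvd_pow_self p (by have := ht i; omega)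
  let f : ((i : Fin m) → ZMod (p ^ t i)) →+ ZMod p :=
    (ZMod.castHom hdvd (ZMod p)).toAddMonoidHom.comp
      (Pi.evalAddMonoidHom (fun i => ZMod (p ^ t i)) i)
  have hx : f x ≠ 0 := by
    intro h
    apply hxi
    have h' : ((x i).cast : ZMod p) = 0 := h
    rw [ZMod.cast_eq_val] at h'
    exact (ZMod.natCast_eq_zero_iff _ _).1 h'
  have hG : Nat.card ((i : Fin m) → ZMod (p ^ t i)) = p ^ (∑ i, t i) := by
    rw [Nat.card_pi, ← Finset.prod_pow_eq_pow_sum]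
    simp
  have hc := constStar _ p hp _ hG f
  constructor
  · obtain ⟨z, hz, hne⟩ := exBlock _ p f x hx k (by omega) hkn
    have := (hc k z x hz hx).2
    intro h
    rw [h, card_empty, card_eq_zero] at this
    exact hne this
  · obtain ⟨j, rfl⟩ : ∃ j, k = j + 1 := ⟨k - 1, by omega⟩
    refine ⟨(sumBlocksStar _ j x).card, fun y => ?_⟩
    rw [cardA]
    have hk : f ((j+1) • y) = 0 := by
      obtain ⟨c, hc⟩ := hpk
      rw [map_nsmul, hc, nsmul_eq_mul]; simp
    exact (hc j _ _ (by rw [map_sub, hk, sub_zero]; exact hx) hx).1
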